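/- Let n ≥ 1 and let μ be a Borel probability measure on the space of real n×n matrices with bounded support, such that (A2) the support of μ leaves some proper cone K ⊆ ℝⁿ invariant, and (A3) the singular part of μ with respect to Lebesgue measure on ℝ^{n×n} is either zero or a finite linear combination of Dirac measures. Let A be a random matrix with law μ. Then ρ̂(supp μ) = lim_{p→∞} ρ(E[A^{⊗p}])^{1/p}, where the limit is over positive integers p and ρ denotes the spectral radius of a square matrix. -/

import Mathlib

open MeasureTheory Filter Topology
open scoped ENNReal RealInnerProductSpace

noncomputable section

/-- The space of real `n × n` matrices. -/
abbrev Mat (n : ℕ) := Matrix (Fin n) (Fin n) ℝ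

/-- Euclidean space `ℝⁿ`. -/
abbrev EucSp (n : ℕ) := EuclideanSpace ℝ (Fin n)

/-- The (Borel = product) measurable structure on `n × n` real matrices. -/
instance matMeasurableSpace (n : ℕ) : MeasurableSpace (Mat n) :=
  inferInstanceAs (MeasurableSpace (Fin n → Fin n → ℝ))

/-- Lebesgue measure on the space of `n × n` real matrices `≅ ℝ^{n²}`. -/
def matLebesgue (n : ℕ) : Measure (Mat n) :=
  (inferInstance : MeasureSpace (Fin n → Fin n → ℝ)).volume

/-- The operator norm (maximal singular value) of a real square matrix, induced by the
Euclidean norm. -/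
def opNorm {m : ℕ} (A : Matrix (Fin m) (Fin m) ℝ) : ℝ :=
  ‖LinearMap.toContinuousLinearMap (Matrix.toEuclideanLin A)‖

/-- The product `A_k ⋯ A_1` of the matrices `f 0 = A_1, …, f (k-1) = A_k` (decreasing order of
indices). -/
def prodRev {m k : ℕ} (f : Fin k → Matrix (Fin m) (Fin m) ℝ) : Matrix (Fin m) (Fin m) ℝ :=
  ((List.ofFn f).reverse).prod

/-- The joint spectral radius of a set of matrices:
`ρ̂(M) = limsup_{k→∞} sup_{A₁,…,A_k ∈ M} ‖A_k ⋯ A₁‖^(1/k)`. -/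
def jsr {m : ℕ} (M : Set (Matrix (Fin m) (Fin m) ℝ)) : ℝ :=
  limsup (fun k : ℕ =>
    sSup {x : ℝ | ∃ f : Fin k → Matrix (Fin m) (Fin m) ℝ,
      (∀ i, f i ∈ M) ∧ x = opNorm (prodRev f)} ^ ((1 : ℝ) / k)) atTop

/-- `E[‖A_k ⋯ A₁‖^p]` where `A₁, …, A_k` are i.i.d. with law `μ`. -/
def kExpNorm {m : ℕ} (μ : Measure (Mat m)) (p k : ℕ) : ℝ :=
  ∫ f : Fin k → Mat m, opNorm (prodRev f) ^ p ∂(Measure.pi fun _ => μ)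

/-- The `L^p`-norm joint spectral radius (`p`-radius) of a probability distribution `μ`:
`ρ_{p,μ} = lim_{k→∞} (E[‖A_k ⋯ A₁‖^p])^{1/(pk)}`; since this limit exists for distributions
with bounded support, it coincides with the `limsup` used here. -/
def pRadius {m : ℕ} (μ : Measure (Mat m)) (p : ℕ) : ℝ :=
  limsup (fun k : ℕ => kExpNorm μ p k ^ (1 / (p * k : ℝ))) atTop

/-- The (topological) support of a measure on matrices. -/
def msupport {m : ℕ} (μ : Measure (Mat m)) : Set (Mat m) :=
  {A | ∀ ε : ℝ, 0 < ε → μ {B | opNorm (B - A) < ε} ≠ 0}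

/-- `μ` has bounded support. -/
def HasBoundedSupport {m : ℕ} (μ : Measure (Mat m)) : Prop :=
  ∃ C : ℝ, ∀ A ∈ msupport μ, opNorm A ≤ C

/-- A proper cone of `ℝⁿ`: a closed convex pointed cone with nonempty interior. -/
structure IsProperCone {m : ℕ} (K : Set (EucSp m)) : Prop where
  isClosed : IsClosed K
  convex : Convex ℝ K
  smul_mem : ∀ c : ℝ, 0 ≤ c → ∀ x ∈ K, c • x ∈ K
  pointed : ∀ x ∈ K, -x ∈ K → x = 0
  solid : (interior K).Nonempty

/-- A matrix `A` leaves a cone `K` invariant: `A K ⊆ K`. -/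
def LeavesInv {m : ℕ} (A : Matrix (Fin m) (Fin m) ℝ) (K : Set (EucSp m)) : Prop :=
  ∀ x ∈ K, Matrix.toEuclideanLin A x ∈ K

/-- A set of matrices leaves a cone invariant if each of its members does. -/
def SetLeavesInv {m : ℕ} (S : Set (Matrix (Fin m) (Fin m) ℝ)) (K : Set (EucSp m)) : Prop :=
  ∀ A ∈ S, LeavesInv A K

/-- `π(K)`: the set of matrices leaving the cone `K` invariant. -/
def piCone {m : ℕ} (K : Set (EucSp m)) : Set (Mat m) := {A | LeavesInv A K}

/-- Distance (valued in `ℝ≥0∞`, with `d(A, ∅) = ∞`) from a matrix to a set of matrices, in the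
operator norm. -/
def edistSet {m : ℕ} (A : Mat m) (S : Set (Mat m)) : ℝ≥0∞ :=
  ⨅ B ∈ S, ENNReal.ofReal (opNorm (A - B))

/-- Hausdorff distance between two sets of matrices (operator norm, valued in `ℝ≥0∞`). -/
def hausdorffDistE {m : ℕ} (S T : Set (Mat m)) : ℝ≥0∞ :=
  max (⨆ A ∈ S, edistSet A T) (⨆ B ∈ T, edistSet B S)

/-- `S_M = {A : A − M leaves K invariant}`, i.e. `{A : A ≥^K M}`. -/
def matSSet {m : ℕ} (K : Set (EucSp m)) (M : Mat m) : Set (Mat m) :=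
  {A | LeavesInv (A - M) K}

/-- `π_r = {M ∈ π(K) : d(M, ∂π(K)) ≥ r}`. -/
def piConeR {m : ℕ} (K : Set (EucSp m)) (r : ℝ) : Set (Mat m) :=
  {M | M ∈ piCone K ∧ ENNReal.ofReal r ≤ edistSet M (frontier (piCone K))}

/-- `M_r = (π_r ∩ supp μ_c) ∪ supp μ_s`. -/
def MrSet {m : ℕ} (K : Set (EucSp m)) (μc μs : Measure (Mat m)) (r : ℝ) : Set (Mat m) :=
  (piConeR K r ∩ msupport μc) ∪ msupport μs

/-- The measure `ν` is zero or a finite linear combination (with positive coefficients) of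
Dirac measures. -/
def IsFiniteDiracComb {m : ℕ} (ν : Measure (Mat m)) : Prop :=
  ν = 0 ∨ ∃ (N : ℕ) (w : Fin N → ℝ) (Ms : Fin N → Mat m),
    (∀ i, 0 < w i) ∧ ν = ∑ i, ENNReal.ofReal (w i) • Measure.dirac (Ms i)

/-- The `p`-th Kronecker power of a square matrix (with `A^{⊗0} = 1`, `A^{⊗(p+1)} = A^{⊗p} ⊗ A`). -/
def kronPow {m : ℕ} (A : Matrix (Fin m) (Fin m) ℝ) :
    (p : ℕ) → Matrix (Fin (m ^ p)) (Fin (m ^ p)) ℝ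
  | 0 => 1
  | p + 1 =>
    Matrix.reindex (finProdFinEquiv.trans (finCongr (pow_succ m p).symm))
      (finProdFinEquiv.trans (finCongr (pow_succ m p).symm))
      (Matrix.kroneckerMap (· * ·) (kronPow A p) A)

/-- The `q`-th Kronecker power of a vector. -/
def vecKronPow {m : ℕ} (x : EucSp m) : (q : ℕ) → EucSp (m ^ q)
  | 0 => WithLp.toLp 2 fun _ => 1
  | q + 1 => WithLp.toLp 2 fun i =>
      vecKronPow x q (finProdFinEquiv.symm (finCongr (pow_succ m q) i)).1 *
        x (finProdFinEquiv.symm (finCongr (pow_succ m q) i)).2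

/-- The spectral radius of a real square matrix: the largest modulus of a complex eigenvalue. -/
def specRad {m : ℕ} (A : Matrix (Fin m) (Fin m) ℝ) : ℝ :=
  sSup ((fun z : ℂ => ‖z‖) '' spectrum ℂ (A.map Complex.ofReal))

/-- The entrywise expectation `E[A^{⊗p}]` of the `p`-th Kronecker power under `μ`. -/
def kronExp {m : ℕ} (μ : Measure (Mat m)) (p : ℕ) :
    Matrix (Fin (m ^ p)) (Fin (m ^ p)) ℝ :=
  Matrix.of fun i j => ∫ A, kronPow A p i j ∂μ

/-- `V` is a stochastic Lyapunov function for `μ` of degree `p` with growth rate `γ`. -/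
def IsStochLyap {m : ℕ} (μ : Measure (Mat m)) (p : ℕ) (γ : ℝ) (V : EucSp m → ℝ) : Prop :=
  (∃ C₁ : ℝ, 0 < C₁ ∧ ∃ C₂ : ℝ, 0 < C₂ ∧
    ∀ x : EucSp m, C₁ * ‖x‖ ^ p ≤ V x ∧ V x ≤ C₂ * ‖x‖ ^ p) ∧
  ∀ x : EucSp m, (∫ A, V (Matrix.toEuclideanLin A x) ∂μ) ≤ γ ^ p * V x

/-- `ν` is a norm on `ℝ^m`. -/
def IsNormFn {m : ℕ} (ν : EucSp m → ℝ) : Prop :=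
  (∀ x, 0 ≤ ν x) ∧ (∀ x, ν x = 0 ↔ x = 0) ∧
  (∀ (a : ℝ) (x : EucSp m), ν (a • x) = |a| * ν x) ∧
  (∀ x y : EucSp m, ν (x + y) ≤ ν x + ν y)

/-- `ν` is cone absolute with respect to `K`:
`ν x = inf {ν (v + w) : v, w ∈ K, x = v − w}`. -/
def IsConeAbsolute {m : ℕ} (K : Set (EucSp m)) (ν : EucSp m → ℝ) : Prop :=
  ∀ x : EucSp m, ν x = sInf {r : ℝ | ∃ v ∈ K, ∃ w ∈ K, x = v - w ∧ r = ν (v + w)}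

/-- The dual cone `K* = {f : fᵀx ≥ 0 for all x ∈ K}`. -/
def dualConeSet {m : ℕ} (K : Set (EucSp m)) : Set (EucSp m) :=
  {f | ∀ x ∈ K, 0 ≤ ⟪f, x⟫}

/-- `ν` is cone linear with respect to `K`: `ν = ⟪f, ·⟫` on `K` for some `f ∈ K*`. -/
def IsConeLinear {m : ℕ} (K : Set (EucSp m)) (ν : EucSp m → ℝ) : Prop :=
  ∃ f ∈ dualConeSet K, ∀ x ∈ K, ν x = ⟪f, x⟫

/-- The matrix norm induced by a norm `ν` on `ℝ^m`. -/
def inducedNormFn {m : ℕ} (ν : EucSp m → ℝ) (A : Matrix (Fin m) (Fin m) ℝ) : ℝ :=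
  sSup {c : ℝ | ∃ x : EucSp m, x ≠ 0 ∧ c = ν (Matrix.toEuclideanLin A x) / ν x}

open scoped Matrix

/-! ### The operator norm and the support -/

instance matSecondCountableTopology (n : ℕ) : SecondCountableTopology (Mat n) :=
  inferInstanceAs (SecondCountableTopology (Fin n → Fin n → ℝ))

instance matBorelSpace (n : ℕ) : BorelSpace (Mat n) :=
  inferInstanceAs (BorelSpace (Fin n → Fin n → ℝ))

lemma opNorm_nonneg {m : ℕ} (A : Mat m) : 0 ≤ opNorm A := norm_nonneg _

lemma norm_toEuclideanLin_le {m : ℕ} (A : Mat m) (x : EucSp m) :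
    ‖Matrix.toEuclideanLin A x‖ ≤ opNorm A * ‖x‖ :=
  (LinearMap.toContinuousLinearMap (Matrix.toEuclideanLin A)).le_opNorm x

lemma opNorm_le {m : ℕ} (A : Mat m) {c : ℝ} (hc : 0 ≤ c)
    (h : ∀ x, ‖Matrix.toEuclideanLin A x‖ ≤ c * ‖x‖) : opNorm A ≤ c :=
  ContinuousLinearMap.opNorm_le_bound _ hc h

lemma toEuclideanLin_mul {m : ℕ} (A B : Mat m) (x : EucSp m) :
    Matrix.toEuclideanLin (A * B) x = Matrix.toEuclideanLin A (Matrix.toEuclideanLin B x) := by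
  simp [Matrix.toLpLin_apply]

lemma continuous_toEuclideanLin_uncurry (m : ℕ) :
    Continuous fun q : EucSp m × Mat m => Matrix.toEuclideanLin q.2 q.1 := by
  simp only [Matrix.toLpLin_apply]
  refine (PiLp.continuous_toLp 2 _).comp ?_
  exact Continuous.matrix_mulVec continuous_snd ((PiLp.continuous_ofLp 2 _).comp continuous_fst)

lemma continuous_toEuclideanLin_apply {m : ℕ} (x : EucSp m) :
    Continuous fun A : Mat m => Matrix.toEuclideanLin A x :=
  (continuous_toEuclideanLin_uncurry m).comp (continuous_const.prodMk continuous_id)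

lemma continuous_opNorm (m : ℕ) : Continuous fun A : Mat m => opNorm A := by
  let L : Mat m →ₗ[ℝ] (EucSp m →L[ℝ] EucSp m) :=
    (LinearMap.toContinuousLinearMap : (EucSp m →ₗ[ℝ] EucSp m) ≃ₗ[ℝ] _).toLinearMap ∘ₗ
      (Matrix.toEuclideanLin : Mat m ≃ₗ[ℝ] _).toLinearMap
  have hL : Continuous L := LinearMap.continuous_of_finiteDimensional (E := Mat m) L
  exact hL.norm

lemma prodRev_cons {m k : ℕ} (A : Mat m) (f : Fin k → Mat m) :
    prodRev (Fin.cons A f : Fin (k + 1) → Mat m) = prodRev f * A := by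
  simp [prodRev, List.ofFn_succ]

lemma apply_prodRev_le {m k : ℕ} {c : ℝ} (hc : 0 ≤ c) (N : EucSp m → ℝ) (f : Fin k → Mat m)
    (h : ∀ i x, N (Matrix.toEuclideanLin (f i) x) ≤ c * N x) (x : EucSp m) :
    N (Matrix.toEuclideanLin (prodRev f) x) ≤ c ^ k * N x := by
  induction k generalizing x with
  | zero => simp [prodRev]
  | succ k ih =>
    rw [← Fin.cons_self_tail f, prodRev_cons, toEuclideanLin_mul]
    calc _ ≤ c ^ k * N (Matrix.toEuclideanLin (f 0) x) := ih _ (fun i x => h _ x) _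
      _ ≤ c ^ k * (c * N x) := by gcongr; exact h 0 x
      _ = _ := by ring

lemma ae_mem_msupport {m : ℕ} (μ : Measure (Mat m)) : ∀ᵐ A ∂μ, A ∈ msupport μ := by
  rw [ae_iff]
  refine measure_null_of_locally_null _ fun A hA => ?_
  simp only [msupport, Set.mem_ofPred_eq, not_forall, not_not] at hA
  obtain ⟨ε, hε, h0⟩ := hA
  refine ⟨_, mem_nhdsWithin_of_mem_nhds ?_, h0⟩
  refine (isOpen_lt ((continuous_opNorm m).comp (continuous_id.sub continuous_const))
    continuous_const).mem_nhds ?_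
  simpa [opNorm] using hε

/-! ### Elementary tensors and Kronecker powers -/

/-- The splitting of an index of the `(p+1)`-st Kronecker power into an index of the `p`-th power
and a base index. -/
def kronIdx (m p : ℕ) : Fin (m ^ (p + 1)) ≃ Fin (m ^ p) × Fin m :=
  (finCongr (pow_succ m p)).trans finProdFinEquiv.symm

/-- The elementary tensor `x₀ ⊗ ⋯ ⊗ x_{p-1}`. -/
def elemTensor {m : ℕ} (x : ℕ → EucSp m) : (p : ℕ) → Fin (m ^ p) → ℝ
  | 0 => fun _ => 1
  | p + 1 => fun i => elemTensor x p (kronIdx m p i).1 * x p (kronIdx m p i).2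

lemma kronPow_succ_apply {m : ℕ} (A : Mat m) (p : ℕ) (i j : Fin (m ^ (p + 1))) :
    kronPow A (p + 1) i j =
      kronPow A p (kronIdx m p i).1 (kronIdx m p j).1 * A (kronIdx m p i).2 (kronIdx m p j).2 :=
  rfl

lemma sum_kronIdx {m p : ℕ} {R : Type*} [AddCommMonoid R] (g : Fin (m ^ p) → Fin m → R) :
    ∑ i, g (kronIdx m p i).1 (kronIdx m p i).2 = ∑ a, ∑ b, g a b := by
  rw [← Fintype.sum_prod_type' g]
  exact (kronIdx m p).sum_comp fun q => g q.1 q.2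

lemma kronPow_mulVec_elemTensor {m : ℕ} (A : Mat m) (x : ℕ → EucSp m) (p : ℕ) :
    kronPow A p *ᵥ elemTensor x p = elemTensor (fun t => Matrix.toEuclideanLin A (x t)) p := by
  induction p with
  | zero => exact Matrix.one_mulVec _
  | succ p ih =>
    funext i
    have key := sum_kronIdx fun a b =>
      kronPow A p (kronIdx m p i).1 a * A (kronIdx m p i).2 b * (elemTensor x p a * x p b)
    have h1 := congrFun ih (kronIdx m p i).1
    simp only [Matrix.mulVec, dotProduct] at h1
    simp only [Matrix.mulVec, dotProduct, kronPow_succ_apply, elemTensor, key]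
    rw [← h1, Matrix.toLpLin_apply]
    simp only [Matrix.mulVec, dotProduct, Finset.sum_mul_sum]
    exact Finset.sum_congr rfl fun a _ => Finset.sum_congr rfl fun b _ => by ring

lemma elemTensor_dotProduct {m : ℕ} (f x : ℕ → EucSp m) (p : ℕ) :
    elemTensor f p ⬝ᵥ elemTensor x p = ∏ t ∈ Finset.range p, ⟪f t, x t⟫ := by
  induction p with
  | zero =>
    simp only [dotProduct, elemTensor, mul_one, Finset.sum_const, Finset.range_zero,
      Finset.prod_empty, nsmul_eq_mul]
    exact congrArg Nat.cast ((Fintype.card_fin _).trans (pow_zero m)) |>.trans Nat.cast_one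
  | succ p ih =>
    have key := sum_kronIdx fun a b => elemTensor f p a * f p b * (elemTensor x p a * x p b)
    simp only [dotProduct] at ih
    simp only [dotProduct, elemTensor, key]
    rw [Finset.prod_range_succ, ← ih, PiLp.inner_apply, Finset.sum_mul_sum]
    refine Finset.sum_congr rfl fun a _ => Finset.sum_congr rfl fun b _ => ?_
    simp only [RCLike.inner_apply, conj_trivial]
    ring

lemma abs_elemTensor_le {m : ℕ} (x : ℕ → EucSp m) (p : ℕ) (i : Fin (m ^ p)) :
    |elemTensor x p i| ≤ ∏ t ∈ Finset.range p, ‖x t‖ := by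
  induction p with
  | zero => simp [elemTensor]
  | succ p ih =>
    simp only [elemTensor, Finset.prod_range_succ, abs_mul]
    gcongr
    · exact ih _
    · exact PiLp.norm_apply_le (x p) _

lemma exists_elemTensor_eq_single {m : ℕ} (p : ℕ) (j : Fin (m ^ p)) :
    ∃ x : ℕ → EucSp m, elemTensor x p = Pi.single j 1 := by
  induction p with
  | zero =>
    refine ⟨0, funext fun i => ?_⟩
    have : i = j := Fin.ext (by have := i.2; have := j.2; simp at *; omega)
    simp [elemTensor, this]
  | succ p ih =>
    obtain ⟨x, hx⟩ := ih (kronIdx m p j).1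
    refine ⟨Function.update x p (EuclideanSpace.single (kronIdx m p j).2 1), funext fun i => ?_⟩
    have hupd : ∀ (y : EucSp m) (q : ℕ), q ≤ p →
        elemTensor (Function.update x p y) q = elemTensor x q := by
      intro y q
      induction q with
      | zero => intro _; rfl
      | succ q ih =>
        intro hq
        funext i
        simp only [elemTensor, ih (by omega), Function.update_of_ne (show q ≠ p by omega)]
    simp only [elemTensor, hupd _ p le_rfl, hx, Function.update_self, Pi.single_apply,
      PiLp.single_apply]
    by_cases hij : i = j
    · simp [hij]
    · have : ¬ ((kronIdx m p i).1 = (kronIdx m p j).1 ∧ (kronIdx m p i).2 = (kronIdx m p j).2) :=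
        fun h => hij ((kronIdx m p).injective (Prod.ext h.1 h.2))
      simp only [hij, if_false]
      by_cases h1 : (kronIdx m p i).1 = (kronIdx m p j).1
      · have h2 : ¬ (kronIdx m p i).2 = (kronIdx m p j).2 := fun h2 => this ⟨h1, h2⟩
        simp [h2]
      · simp [h1]

lemma continuous_kronPow_apply {m : ℕ} (p : ℕ) (i j : Fin (m ^ p)) :
    Continuous fun A : Mat m => kronPow A p i j := by
  induction p with
  | zero => exact continuous_const
  | succ p ih =>
    simp only [kronPow_succ_apply]
    exact (ih _ _).mul (continuous_id.matrix_elem _ _)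

lemma continuous_elemTensor_apply {m : ℕ} (x : ℕ → EucSp m) (p : ℕ) (i : Fin (m ^ p)) :
    Continuous fun A : Mat m => elemTensor (fun t => Matrix.toEuclideanLin A (x t)) p i := by
  simp only [← kronPow_mulVec_elemTensor, Matrix.mulVec, dotProduct]
  exact continuous_finsetSum _ fun j _ => (continuous_kronPow_apply p i j).mul continuous_const

/-! ### Integration against a measure of bounded support -/

lemma integrable_elemTensor {m : ℕ} {μ : Measure (Mat m)} [IsProbabilityMeasure μ]
    (hbdd : HasBoundedSupport μ) (x : ℕ → EucSp m) (p : ℕ) (i : Fin (m ^ p)) :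
    Integrable (fun A : Mat m => elemTensor (fun t => Matrix.toEuclideanLin A (x t)) p i) μ := by
  obtain ⟨C, hC⟩ := hbdd
  refine Integrable.of_bound (continuous_elemTensor_apply x p i).aestronglyMeasurable
    (∏ t ∈ Finset.range p, (C * ‖x t‖)) ?_
  filter_upwards [ae_mem_msupport μ] with A hA
  refine (abs_elemTensor_le _ p i).trans (Finset.prod_le_prod (fun _ _ => norm_nonneg _) ?_)
  intro t _
  exact (norm_toEuclideanLin_le A _).trans (by gcongr; exact hC A hA)

lemma integrable_kronPow {m : ℕ} {μ : Measure (Mat m)} [IsProbabilityMeasure μ]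
    (hbdd : HasBoundedSupport μ) (p : ℕ) (i j : Fin (m ^ p)) :
    Integrable (fun A : Mat m => kronPow A p i j) μ := by
  obtain ⟨x, hx⟩ := exists_elemTensor_eq_single p j
  refine (integrable_elemTensor hbdd x p i).congr (Eventually.of_forall fun A => ?_)
  simp [← kronPow_mulVec_elemTensor, hx]

lemma integral_elemTensor {m : ℕ} {μ : Measure (Mat m)} [IsProbabilityMeasure μ]
    (hbdd : HasBoundedSupport μ) (x : ℕ → EucSp m) (p : ℕ) (i : Fin (m ^ p)) :
    ∫ A, elemTensor (fun t => Matrix.toEuclideanLin A (x t)) p i ∂μ =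
      (kronExp μ p *ᵥ elemTensor x p) i := by
  simp only [← kronPow_mulVec_elemTensor, Matrix.mulVec, dotProduct, kronExp, Matrix.of_apply]
  rw [integral_finsetSum _ fun j _ => (integrable_kronPow hbdd p i j).mul_const _]
  simp_rw [integral_mul_const]

/-! ### The joint spectral radius -/

lemma opNorm_prodRev_le_pow {m k : ℕ} {M : Set (Mat m)} {C : ℝ} (hC : 0 ≤ C)
    (hM : ∀ A ∈ M, opNorm A ≤ C) (f : Fin k → Mat m) (hf : ∀ i, f i ∈ M) :
    opNorm (prodRev f) ≤ C ^ k :=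
  opNorm_le _ (pow_nonneg hC k) fun x => apply_prodRev_le hC (fun y => ‖y‖) f
    (fun i x => (norm_toEuclideanLin_le _ x).trans (by gcongr; exact hM _ (hf i))) x

lemma sSup_opNorm_prodRev_nonneg {m : ℕ} (M : Set (Mat m)) (k : ℕ) :
    0 ≤ sSup {x : ℝ | ∃ f : Fin k → Mat m, (∀ i, f i ∈ M) ∧ x = opNorm (prodRev f)} :=
  Real.sSup_nonneg (by rintro _ ⟨f, -, rfl⟩; exact opNorm_nonneg _)

lemma jsr_le_of_opNorm_prodRev_le {m : ℕ} {M : Set (Mat m)} {C r : ℝ} (hC : 0 < C) (hr : 0 ≤ r)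
    (h : ∀ (k : ℕ) (f : Fin k → Mat m), (∀ i, f i ∈ M) → opNorm (prodRev f) ≤ C * r ^ k) :
    jsr M ≤ r := by
  have hlim : Tendsto (fun k : ℕ => C ^ ((1 : ℝ) / k) * r) atTop (𝓝 r) := by
    have h1 : Tendsto (fun k : ℕ => C ^ ((1 : ℝ) / k)) atTop (𝓝 (C ^ (0 : ℝ))) :=
      (Real.continuousAt_const_rpow hC.ne').tendsto.comp tendsto_one_div_atTop_nhds_zero_nat
    simpa using h1.mul_const r
  refine le_of_forall_pos_le_add fun ε hε => ?_
  refine limsup_le_of_le ?_ ?_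
  · exact isCoboundedUnder_le_of_le atTop (x := 0) fun k =>
      Real.rpow_nonneg (sSup_opNorm_prodRev_nonneg M k) _
  · filter_upwards [hlim.eventually (gt_mem_nhds (show r < r + ε by linarith)),
      eventually_gt_atTop 0] with k hk hk0
    refine le_trans ?_ hk.le
    calc _ ≤ (C * r ^ k) ^ ((1 : ℝ) / k) := by
          gcongr
          · exact sSup_opNorm_prodRev_nonneg M k
          · refine Real.sSup_le ?_ (by positivity)
            rintro _ ⟨f, hf, rfl⟩
            exact h k f hf
      _ = _ := by
          rw [Real.mul_rpow hC.le (by positivity), one_div, Real.pow_rpow_inv_natCast hr hk0.ne']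

lemma isBoundedUnder_jsr {m : ℕ} {M : Set (Mat m)} {C : ℝ} (hM : ∀ A ∈ M, opNorm A ≤ C) :
    IsBoundedUnder (· ≤ ·) atTop (fun k : ℕ => sSup {x : ℝ | ∃ f : Fin k → Mat m,
      (∀ i, f i ∈ M) ∧ x = opNorm (prodRev f)} ^ ((1 : ℝ) / k)) := by
  have hC : 0 ≤ max C 0 := le_max_right _ _
  refine isBoundedUnder_of_eventually_le (a := max C 0) ?_
  filter_upwards [eventually_gt_atTop 0] with k hk
  calc _ ≤ (max C 0 ^ k) ^ ((1 : ℝ) / k) := by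
        gcongr
        · exact sSup_opNorm_prodRev_nonneg M k
        · refine Real.sSup_le ?_ (by positivity)
          rintro _ ⟨f, hf, rfl⟩
          exact opNorm_prodRev_le_pow hC (fun A hA => (hM A hA).trans (le_max_left _ _)) f hf
    _ = max C 0 := by rw [one_div, Real.pow_rpow_inv_natCast hC hk.ne']

lemma jsr_nonneg {m : ℕ} {M : Set (Mat m)} {C : ℝ} (hM : ∀ A ∈ M, opNorm A ≤ C) : 0 ≤ jsr M :=
  le_limsup_of_le (isBoundedUnder_jsr hM) fun b hb => by
    obtain ⟨k, hk⟩ := hb.exists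
    exact (Real.rpow_nonneg (sSup_opNorm_prodRev_nonneg M k) _).trans hk

lemma eventually_opNorm_prodRev_le {m : ℕ} {M : Set (Mat m)} {C s : ℝ}
    (hM : ∀ A ∈ M, opNorm A ≤ C) (hs : jsr M < s) :
    ∀ᶠ k : ℕ in atTop, ∀ f : Fin k → Mat m, (∀ i, f i ∈ M) → opNorm (prodRev f) ≤ s ^ k := by
  filter_upwards [eventually_lt_of_limsup_lt hs (isBoundedUnder_jsr hM),
    eventually_gt_atTop 0] with k hk hk0 f hf
  have h0 := sSup_opNorm_prodRev_nonneg M k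
  have hbdd : BddAbove {x : ℝ | ∃ f : Fin k → Mat m, (∀ i, f i ∈ M) ∧
      x = opNorm (prodRev f)} := by
    refine ⟨max C 0 ^ k, ?_⟩
    rintro _ ⟨g, hg, rfl⟩
    exact opNorm_prodRev_le_pow (le_max_right _ _)
      (fun A hA => (hM A hA).trans (le_max_left _ _)) g hg
  calc opNorm (prodRev f) ≤ _ := le_csSup hbdd ⟨f, hf, rfl⟩
    _ = (_ ^ ((1 : ℝ) / k)) ^ k := by
      rw [one_div, Real.rpow_inv_natCast_pow h0 hk0.ne']
    _ ≤ s ^ k := by gcongr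

/-! ### The spectral radius -/

section Spectrum

attribute [local instance] Matrix.linftyOpNormedRing Matrix.linftyOpNormedAlgebra

lemma specRad_nonneg {m : ℕ} (T : Mat m) : 0 ≤ specRad T :=
  Real.sSup_nonneg (by rintro _ ⟨z, -, rfl⟩; exact norm_nonneg z)

lemma norm_le_specRad {m : ℕ} (T : Mat m) {z : ℂ}
    (hz : z ∈ spectrum ℂ (T.map Complex.ofReal)) : ‖z‖ ≤ specRad T := by
  refine le_csSup ?_ ⟨z, hz, rfl⟩
  exact ((spectrum.isCompact (𝕜 := ℂ) (T.map Complex.ofReal)).image continuous_norm).bddAbove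

lemma eventually_abs_pow_apply_le {m : ℕ} (hm : 0 < m) (T : Mat m) {R : ℝ} (hR : specRad T < R) :
    ∀ᶠ k : ℕ in atTop, ∀ i j, |(T ^ k) i j| ≤ R ^ k := by
  have : Nonempty (Fin m) := ⟨⟨0, hm⟩⟩
  have hR0 : 0 < R := (specRad_nonneg T).trans_lt hR
  lift R to NNReal using hR0.le
  have hlt : spectralRadius ℂ (T.map Complex.ofReal) < (R : ℝ≥0∞) :=
    spectrum.spectralRadius_lt_of_forall_lt _ fun z hz => by
      exact_mod_cast (norm_le_specRad T hz).trans_lt hR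
  have h1 := (spectrum.pow_nnnorm_pow_one_div_tendsto_nhds_spectralRadius
    (T.map Complex.ofReal)).eventually (gt_mem_nhds hlt)
  filter_upwards [h1, eventually_gt_atTop 0] with k hk hk0 i j
  have h2 : ‖(T.map Complex.ofReal) ^ k‖₊ ≤ R ^ k := by
    have := pow_le_pow_left' hk.le k
    rw [one_div, ENNReal.rpow_inv_natCast_pow hk0.ne'] at this
    exact_mod_cast this
  have h3 : (T.map Complex.ofReal) ^ k = (T ^ k).map Complex.ofReal :=
    (Matrix.map_pow T Complex.ofRealHom k).symm
  have h4 : ‖((T ^ k).map Complex.ofReal) i j‖₊ ≤ ‖(T ^ k).map Complex.ofReal‖₊ := by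
    rw [Matrix.linfty_opNNNorm_def]
    exact (Finset.single_le_sum (f := fun j => ‖((T ^ k).map Complex.ofReal) i j‖₊)
      (fun _ _ => zero_le) (Finset.mem_univ j)).trans
      (Finset.le_sup (f := fun i => ∑ j, ‖((T ^ k).map Complex.ofReal) i j‖₊) (Finset.mem_univ i))
  have h5 : ‖((T ^ k).map Complex.ofReal) i j‖₊ ≤ R ^ k := h4.trans (h3 ▸ h2)
  have h6 : ‖((T ^ k).map Complex.ofReal) i j‖ ≤ (R : ℝ) ^ k := by exact_mod_cast h5
  simpa using h6

end Spectrum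

/-! ### The upper bound -/

lemma norm_sum_mul_elemTensor_le {m p : ℕ} {μ : Measure (Mat m)} [IsProbabilityMeasure μ]
    (hbdd : HasBoundedSupport μ) {z : ℂ} {ψ : Fin (m ^ p) → ℂ}
    (hψ : ψ ᵥ* (kronExp μ p).map Complex.ofReal = z • ψ) (k : ℕ) (x : ℕ → EucSp m) (b : ℕ → ℝ)
    (hb : ∀ t, ∀ f : Fin k → Mat m, (∀ i, f i ∈ msupport μ) →
      ‖Matrix.toEuclideanLin (prodRev f) (x t)‖ ≤ b t) :
    ‖z‖ ^ k * ‖∑ i, ψ i * (elemTensor x p i : ℂ)‖ ≤ (∑ i, ‖ψ i‖) * ∏ t ∈ Finset.range p, b t := by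
  induction k generalizing x with
  | zero =>
    simp only [pow_zero, one_mul, Finset.sum_mul]
    refine norm_sum_le_of_le _ fun i _ => ?_
    rw [norm_mul, Complex.norm_real]
    gcongr
    refine (abs_elemTensor_le x p i).trans (Finset.prod_le_prod (fun _ _ => norm_nonneg _) ?_)
    intro t _
    simpa [prodRev] using hb t Fin.elim0 (fun i => i.elim0)
  | succ k ih =>
    have hcoef : z * ∑ i, ψ i * (elemTensor x p i : ℂ) =
        ∫ A, ∑ i, ψ i * (elemTensor (fun t => Matrix.toEuclideanLin A (x t)) p i : ℂ) ∂μ := by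
      have hint : ∀ i ∈ Finset.univ, Integrable (fun A : Mat m =>
          ψ i * (elemTensor (fun t => Matrix.toEuclideanLin A (x t)) p i : ℂ)) μ := fun i _ =>
        ((integrable_elemTensor hbdd x p i).ofReal (𝕜 := ℂ)).const_mul (ψ i)
      rw [integral_finsetSum _ hint]
      have h1 : ∀ i, ∫ A, ψ i * (elemTensor (fun t => Matrix.toEuclideanLin A (x t)) p i : ℂ) ∂μ =
          ψ i * ∑ j, ((kronExp μ p i j : ℝ) : ℂ) * (elemTensor x p j : ℂ) := by
        intro i
        rw [integral_const_mul, integral_complex_ofReal, integral_elemTensor hbdd]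
        simp [Matrix.mulVec, dotProduct]
      have h2 : ∀ j, z * ψ j = ∑ i, ψ i * ((kronExp μ p i j : ℝ) : ℂ) := fun j => by
        simpa [Matrix.vecMul, dotProduct] using (congrFun hψ j).symm
      simp_rw [h1, Finset.mul_sum, ← mul_assoc, h2]
      rw [Finset.sum_comm]
      simp_rw [Finset.sum_mul]
    calc _ = ‖z‖ ^ k * ‖z * ∑ i, ψ i * (elemTensor x p i : ℂ)‖ := by rw [norm_mul]; ring
      _ = ‖∫ A, z ^ k *
          ∑ i, ψ i * (elemTensor (fun t => Matrix.toEuclideanLin A (x t)) p i : ℂ) ∂μ‖ := by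
        rw [integral_const_mul, hcoef, norm_mul (z ^ k), norm_pow]
      _ ≤ (∑ i, ‖ψ i‖) * ∏ t ∈ Finset.range p, b t := by
        refine (norm_integral_le_of_norm_le_const
          (C := (∑ i, ‖ψ i‖) * ∏ t ∈ Finset.range p, b t) ?_).trans_eq (by simp)
        filter_upwards [ae_mem_msupport μ] with A hA
        rw [norm_mul, norm_pow]
        refine ih _ fun t f hf => ?_
        rw [← toEuclideanLin_mul, ← prodRev_cons]
        exact hb t _ (Fin.cases hA hf)

lemma specRad_kronExp_le {m p : ℕ} {μ : Measure (Mat m)} [IsProbabilityMeasure μ]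
    (hbdd : HasBoundedSupport μ) {s : ℝ} (hs : 0 < s)
    (h : ∀ᶠ k : ℕ in atTop, ∀ f : Fin k → Mat m, (∀ i, f i ∈ msupport μ) →
      opNorm (prodRev f) ≤ s ^ k) :
    specRad (kronExp μ p) ≤ s ^ p := by
  refine Real.sSup_le ?_ (by positivity)
  rintro _ ⟨z, hz, rfl⟩
  rw [spectrum.mem_iff, Matrix.isUnit_iff_isUnit_det, isUnit_iff_ne_zero, not_not,
    ← Matrix.exists_vecMul_eq_zero_iff] at hz
  obtain ⟨ψ, hψ0, hψ⟩ := hz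
  have hψ' : ψ ᵥ* (kronExp μ p).map Complex.ofReal = z • ψ := by
    rw [Matrix.vecMul_sub, sub_eq_zero] at hψ
    rw [← hψ, Matrix.algebraMap_eq_diagonal]
    ext i
    rw [Matrix.vecMul_diagonal]
    exact mul_comm _ _
  obtain ⟨j, hj⟩ := Function.ne_iff.1 hψ0
  obtain ⟨x, hx⟩ := exists_elemTensor_eq_single p j
  have hj0 : 0 < ‖ψ j‖ := norm_pos_iff.2 hj
  have hbound : ∀ᶠ k : ℕ in atTop, (‖z‖ / s ^ p) ^ k ≤
      (∑ i, ‖ψ i‖) * (∏ t ∈ Finset.range p, ‖x t‖) / ‖ψ j‖ := by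
    filter_upwards [h] with k hk
    have := norm_sum_mul_elemTensor_le hbdd hψ' k x (fun t => s ^ k * ‖x t‖) fun t f hf =>
      (norm_toEuclideanLin_le _ _).trans (by gcongr; exact hk f hf)
    rw [hx, Finset.prod_mul_distrib, Finset.prod_const, Finset.card_range] at this
    simp only [Pi.single_apply, apply_ite Complex.ofReal, Complex.ofReal_one, Complex.ofReal_zero,
      mul_ite, mul_one, mul_zero, Finset.sum_ite_eq', Finset.mem_univ, if_true] at this
    rw [div_pow, div_le_div_iff₀ (by positivity) hj0]
    calc _ ≤ _ := this
      _ = _ := by ring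
  by_contra! hlt
  have hgt : 1 < ‖z‖ / s ^ p := (one_lt_div (by positivity)).2 hlt
  obtain ⟨k, hk1, hk2⟩ :=
    (hbound.and ((tendsto_pow_atTop_atTop_of_one_lt hgt).eventually_gt_atTop _)).exists
  exact absurd hk1 (not_le.2 hk2)

/-! ### Seminorms contracted in mean, and their limits -/

lemma seminorm_le_mul_norm {m : ℕ} (q : Seminorm ℝ (EucSp m)) (x : EucSp m) :
    q x ≤ (∑ i, q (EuclideanSpace.single i 1)) * ‖x‖ := by
  have hx : x = ∑ i, x i • EuclideanSpace.single i (1 : ℝ) := by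
    ext j
    simp [Finset.sum_apply, Pi.single_apply]
  calc q x = q (∑ i, x i • EuclideanSpace.single i (1 : ℝ)) := by rw [← hx]
    _ ≤ ∑ i, q (x i • EuclideanSpace.single i (1 : ℝ)) :=
      Finset.le_sum_of_subadditive q (map_zero q).le (map_add_le_add q) _ _
    _ ≤ ∑ i, q (EuclideanSpace.single i 1) * ‖x‖ := by
      refine Finset.sum_le_sum fun i _ => ?_
      rw [map_smul_eq_mul, mul_comm]
      gcongr
      exact PiLp.norm_apply_le x i
    _ = _ := by rw [Finset.sum_mul]

lemma abs_seminorm_sub_le {m : ℕ} (q : Seminorm ℝ (EucSp m)) (x y : EucSp m) :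
    |q x - q y| ≤ (∑ i, q (EuclideanSpace.single i 1)) * ‖x - y‖ :=
  (abs_sub_map_le_sub q x y).trans (seminorm_le_mul_norm q _)

lemma continuous_seminorm {m : ℕ} (q : Seminorm ℝ (EucSp m)) : Continuous q := by
  have h0 : 0 ≤ ∑ i, q (EuclideanSpace.single i 1) :=
    Finset.sum_nonneg fun i _ => apply_nonneg q _
  exact (LipschitzWith.of_dist_le_mul (K := ⟨_, h0⟩) fun x y => by
    rw [Real.dist_eq, dist_eq_norm]; exact abs_seminorm_sub_le q x y).continuous

lemma exists_norm_le_mul_seminorm {m : ℕ} (q : Seminorm ℝ (EucSp m))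
    (Y : Submodule ℝ (EucSp m)) (hq : ∀ y ∈ Y, q y = 0 → y = 0) :
    ∃ c : ℝ, 0 < c ∧ ∀ y ∈ Y, ‖y‖ ≤ c * q y := by
  have hcpt : IsCompact (Metric.sphere (0 : EucSp m) 1 ∩ Y) :=
    (isCompact_sphere _ _).inter_right Y.closed_of_finiteDimensional
  have hscale : ∀ y ∈ Y, y ≠ 0 → ‖y‖⁻¹ • y ∈ Metric.sphere (0 : EucSp m) 1 ∩ Y := by
    intro y hy hy0
    refine ⟨?_, Y.smul_mem _ hy⟩
    simp [norm_smul, hy0]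
  rcases (Metric.sphere (0 : EucSp m) 1 ∩ Y).eq_empty_or_nonempty with he | hne
  · refine ⟨1, one_pos, fun y hy => ?_⟩
    by_cases hy0 : y = 0
    · simp [hy0]
    · exact absurd (hscale y hy hy0) (he ▸ Set.notMem_empty _)
  · obtain ⟨z, ⟨hz1, hzY⟩, hz⟩ := hcpt.exists_isMinOn hne (continuous_seminorm q).continuousOn
    have hqz : 0 < q z := by
      refine lt_of_le_of_ne (apply_nonneg q z) fun h => ?_
      rw [hq z hzY h.symm] at hz1
      simp at hz1
    refine ⟨(q z)⁻¹, inv_pos.2 hqz, fun y hy => ?_⟩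
    by_cases hy0 : y = 0
    · simp [hy0]
    have h1 : q z ≤ q (‖y‖⁻¹ • y) := hz (hscale y hy hy0)
    have hy1 : 0 < ‖y‖ := norm_pos_iff.2 hy0
    rw [map_smul_eq_mul, norm_inv, norm_norm] at h1
    rw [← div_eq_inv_mul] at h1 ⊢
    rw [le_div_iff₀ hqz, mul_comm]
    exact (le_div_iff₀ hy1).1 h1

lemma exists_projection {m : ℕ} (W : Submodule ℝ (EucSp m)) :
    ∃ P : EucSp m →ₗ[ℝ] EucSp m, (∀ x, P x ∈ W) ∧ ∀ x ∈ W, P x = x := by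
  obtain ⟨g, hg⟩ := W.subtype.exists_leftInverse_of_injective W.ker_subtype
  refine ⟨W.subtype ∘ₗ g, fun x => (g x).2, fun x hx => ?_⟩
  have := LinearMap.congr_fun hg ⟨x, hx⟩
  simpa using congrArg Subtype.val this

/-- `v` is a norm whose `p`-th power is contracted in mean by the factor `r ^ p`. -/
def IsMeanContracted {m : ℕ} (μ : Measure (Mat m)) (r : ℝ) (p : ℕ)
    (v : Seminorm ℝ (EucSp m)) : Prop :=
  (∀ x, v x = 0 → x = 0) ∧
    ∀ x, ∫⁻ A, ENNReal.ofReal (v (Matrix.toEuclideanLin A x)) ^ p ∂μ ≤ ENNReal.ofReal (r * v x) ^ p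

lemma exists_limit_seminorm {m : ℕ} {μ : Measure (Mat m)} {r : ℝ} (hr : 0 ≤ r)
    (hv : ∃ᶠ p in atTop, ∃ v, IsMeanContracted μ r p v) {W : Submodule ℝ (EucSp m)} (hW : W ≠ ⊥)
    (hinv : ∀ A ∈ msupport μ, ∀ x ∈ W, Matrix.toEuclideanLin A x ∈ W) :
    ∃ u : Seminorm ℝ (EucSp m), (∃ x ∈ W, u x ≠ 0) ∧
      ∀ A ∈ msupport μ, ∀ x ∈ W, u (Matrix.toEuclideanLin A x) ≤ r * u x := by
  obtain ⟨P, hPW, hP⟩ := exists_projection W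
  set s : Set ℕ := {p | ∃ v, IsMeanContracted μ r p v} with hs
  have hs' : ∀ p ∈ s, ∃ v, IsMeanContracted μ r p v := fun p hp => hp
  choose! v hv0 hvI using hs'
  have : NeBot (atTop ⊓ 𝓟 s) := frequently_mem_iff_neBot.1 hv
  set U : Ultrafilter ℕ := Ultrafilter.of (atTop ⊓ 𝓟 s)
  have hU : (U : Filter ℕ) ≤ atTop ⊓ 𝓟 s := Ultrafilter.of_le _
  have hUs : ∀ᶠ p in (U : Filter ℕ), p ∈ s := (hU.trans inf_le_right) (mem_principal_self s)
  have hUtop : (U : Filter ℕ) ≤ atTop := hU.trans inf_le_left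
  set M : ℕ → ℝ := fun p => ∑ i, (v p).comp P (EuclideanSpace.single i 1) with hM
  have hMpos : ∀ p ∈ s, 0 < M p := by
    intro p hp
    obtain ⟨x, hxW, hx0⟩ := W.exists_mem_ne_zero_of_ne_bot hW
    by_contra! hle
    have h1 := seminorm_le_mul_norm ((v p).comp P) x
    have h2 : (v p) x ≤ 0 := by
      have : (v p).comp P x = v p x := by rw [Seminorm.comp_apply, hP x hxW]
      rw [← this]
      exact h1.trans (mul_nonpos_of_nonpos_of_nonneg hle (norm_nonneg x))
    exact hx0 (hv0 p hp x (le_antisymm h2 (apply_nonneg _ _)))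
  set w : ℕ → EucSp m → ℝ := fun p x => (M p)⁻¹ * (v p).comp P x with hw
  have hMnonneg : ∀ p, 0 ≤ M p := fun p => Finset.sum_nonneg fun i _ => apply_nonneg _ _
  have hwnonneg : ∀ p x, 0 ≤ w p x := fun p x =>
    mul_nonneg (inv_nonneg.2 (hMnonneg p)) (apply_nonneg _ _)
  have hwsub : ∀ p ∈ s, ∀ x y, |w p x - w p y| ≤ ‖x - y‖ := by
    intro p hp x y
    simp only [hw]
    rw [← mul_sub, abs_mul, abs_of_nonneg (inv_nonneg.2 (hMnonneg p)),
      inv_mul_le_iff₀ (hMpos p hp)]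
    exact abs_seminorm_sub_le _ x y
  have hwle : ∀ p ∈ s, ∀ x, w p x ≤ ‖x‖ := fun p hp x => by
    simpa [hw] using (le_abs_self _).trans (hwsub p hp x 0)
  have hlim : ∀ x, ∃ a, Tendsto (fun p => w p x) U (𝓝 a) := by
    intro x
    obtain ⟨a, -, ha⟩ := (isCompact_Icc (a := 0) (b := ‖x‖)).ultrafilter_le_nhds
      (U.map fun p => w p x) (by
        rw [le_principal_iff, Ultrafilter.mem_coe, Ultrafilter.mem_map, ← Ultrafilter.mem_coe]
        filter_upwards [hUs] with p hp
        exact ⟨hwnonneg p x, hwle p hp x⟩)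
    exact ⟨a, ha⟩
  choose u hu using hlim
  let u' : Seminorm ℝ (EucSp m) := Seminorm.of u
    (fun x y => by
      refine le_of_tendsto_of_tendsto' (hu (x + y)) ((hu x).add (hu y)) fun p => ?_
      simp only [hw, ← mul_add]
      exact mul_le_mul_of_nonneg_left (map_add_le_add _ x y) (inv_nonneg.2 (hMnonneg p)))
    (fun a x => by
      refine tendsto_nhds_unique (hu (a • x)) (((hu x).const_mul ‖a‖).congr fun p => ?_)
      simp only [hw, map_smul_eq_mul]
      ring)
  refine ⟨u', ?_, ?_⟩
  · have hsum : ∑ i, u (EuclideanSpace.single i 1) = 1 := by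
      refine tendsto_nhds_unique (tendsto_finsetSum _ fun i _ => hu (EuclideanSpace.single i 1)) ?_
      refine tendsto_const_nhds.congr' ?_
      filter_upwards [hUs] with p hp
      simp only [hw, ← Finset.mul_sum]
      exact (inv_mul_cancel₀ (hMpos p hp).ne').symm
    obtain ⟨i, -, hi⟩ := Finset.exists_ne_zero_of_sum_ne_zero (hsum ▸ one_ne_zero)
    refine ⟨P (EuclideanSpace.single i 1), hPW _, ?_⟩
    have : u (P (EuclideanSpace.single i 1)) = u (EuclideanSpace.single i 1) := by
      refine tendsto_nhds_unique (hu _) ((hu _).congr fun p => ?_)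
      simp only [hw, Seminorm.comp_apply, hP _ (hPW _)]
    exact this.trans_ne hi
  · intro A hA x hx
    by_contra! hlt
    change r * u x < u (Matrix.toEuclideanLin A x) at hlt
    have hux : 0 ≤ r * u x := mul_nonneg hr (apply_nonneg u' x)
    obtain ⟨a, ha1, ha2⟩ := exists_between hlt
    obtain ⟨b, hb1, hb2⟩ := exists_between ha2
    obtain ⟨c, hc1, hc2⟩ := exists_between hb2
    have ha0 : 0 < a := hux.trans_lt ha1
    have hb0 : 0 < b := ha0.trans hb1
    obtain ⟨δ, hδ, hδx⟩ : ∃ δ : ℝ, 0 < δ ∧ δ * ‖x‖ ≤ c - b := by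
      refine ⟨(c - b) / (‖x‖ + 1), div_pos (by linarith) (by positivity), ?_⟩
      rw [div_mul_eq_mul_div, div_le_iff₀ (by positivity)]
      nlinarith [norm_nonneg x]
    have hmass := hA δ hδ
    set B : Set (Mat m) := {B | opNorm (B - A) < δ} with hB
    have hBle : ∀ᶠ p in (U : Filter ℕ), μ B ≤ ENNReal.ofReal (a / b) ^ p := by
      filter_upwards [hUs, (hu x).const_mul r |>.eventually (gt_mem_nhds ha1),
        (hu (Matrix.toEuclideanLin A x)).eventually (lt_mem_nhds hc2)] with p hp hpa hpc
      have hmeas : Measurable fun D : Mat m =>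
          ENNReal.ofReal (w p (Matrix.toEuclideanLin D x)) ^ p := by
        have h1 : Continuous fun D : Mat m => w p (Matrix.toEuclideanLin D x) :=
          continuous_const.mul
            ((continuous_seminorm ((v p).comp P)).comp (continuous_toEuclideanLin_apply x))
        exact (ENNReal.measurable_ofReal.comp h1.measurable).pow_const p
      have hsub : B ⊆ {D | ENNReal.ofReal b ^ p ≤
          ENNReal.ofReal (w p (Matrix.toEuclideanLin D x)) ^ p} := by
        intro D hD
        refine pow_le_pow_left' (ENNReal.ofReal_le_ofReal ?_) p
        have h1 := (abs_le.1 (hwsub p hp (Matrix.toEuclideanLin D x)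
          (Matrix.toEuclideanLin A x))).1
        have h2 : ‖Matrix.toEuclideanLin D x - Matrix.toEuclideanLin A x‖ ≤ δ * ‖x‖ := by
          rw [← LinearMap.sub_apply, ← map_sub]
          exact (norm_toEuclideanLin_le _ x).trans
            (mul_le_mul_of_nonneg_right (le_of_lt hD) (norm_nonneg x))
        linarith
      have hscale : ∀ y ∈ W, w p y = (M p)⁻¹ * v p y := fun y hy => by
        simp only [hw, Seminorm.comp_apply, hP y hy]
      have hint : ∫⁻ D, ENNReal.ofReal (w p (Matrix.toEuclideanLin D x)) ^ p ∂μ ≤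
          ENNReal.ofReal a ^ p := by
        calc _ = ∫⁻ D, ENNReal.ofReal (M p)⁻¹ ^ p *
              ENNReal.ofReal (v p (Matrix.toEuclideanLin D x)) ^ p ∂μ := by
              refine lintegral_congr_ae ?_
              filter_upwards [ae_mem_msupport μ] with D hD
              rw [hscale _ (hinv D hD x hx),
                ENNReal.ofReal_mul (inv_nonneg.2 (hMnonneg p)), mul_pow]
          _ = ENNReal.ofReal (M p)⁻¹ ^ p *
              ∫⁻ D, ENNReal.ofReal (v p (Matrix.toEuclideanLin D x)) ^ p ∂μ :=
              lintegral_const_mul' _ _ (ENNReal.pow_ne_top ENNReal.ofReal_ne_top)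
          _ ≤ ENNReal.ofReal (M p)⁻¹ ^ p * ENNReal.ofReal (r * v p x) ^ p := by
              gcongr
              exact hvI p hp x
          _ = ENNReal.ofReal (r * w p x) ^ p := by
              rw [← mul_pow, ← ENNReal.ofReal_mul (inv_nonneg.2 (hMnonneg p)), hscale x hx]
              congr 2
              ring
          _ ≤ ENNReal.ofReal a ^ p := by gcongr
      have h3 : ENNReal.ofReal b ^ p * μ B ≤ ENNReal.ofReal a ^ p :=
        (mul_le_mul_right (measure_mono hsub) _).trans
          ((mul_meas_ge_le_lintegral hmeas _).trans hint)
      rw [← ENNReal.ofReal_pow (by positivity), div_pow, ENNReal.ofReal_div_of_pos (by positivity),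
        ENNReal.ofReal_pow hb0.le, ENNReal.ofReal_pow ha0.le,
        ENNReal.le_div_iff_mul_le (Or.inl (by simp [hb0])) (Or.inl (by simp)), mul_comm]
      exact h3
    have hzero : Tendsto (fun p : ℕ => ENNReal.ofReal (a / b) ^ p) U (𝓝 0) :=
      (ENNReal.tendsto_pow_atTop_nhds_zero_of_lt_one (by
        rw [ENNReal.ofReal_lt_one, div_lt_one hb0]
        exact hb1)).mono_left hUtop
    exact hmass (le_antisymm (ge_of_tendsto hzero hBle) zero_le)

lemma exists_contracted_seminorm {m : ℕ} {μ : Measure (Mat m)} (hbdd : HasBoundedSupport μ)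
    {r r' : ℝ} (hr : 0 ≤ r) (hrr' : r < r')
    (hv : ∃ᶠ p in atTop, ∃ v, IsMeanContracted μ r p v) (W : Submodule ℝ (EucSp m))
    (hinv : ∀ A ∈ msupport μ, ∀ x ∈ W, Matrix.toEuclideanLin A x ∈ W) :
    ∃ N : Seminorm ℝ (EucSp m), (∀ x ∈ W, N x = 0 → x = 0) ∧
      ∀ A ∈ msupport μ, ∀ x ∈ W, N (Matrix.toEuclideanLin A x) ≤ r' * N x := by
  obtain ⟨C, hC⟩ := hbdd
  induction hd : Module.finrank ℝ W using Nat.strong_induction_on generalizing W with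
  | _ d ih =>
  by_cases hW : W = ⊥
  · refine ⟨0, ?_, ?_⟩
    · rintro x hx -
      simpa [hW] using hx
    · simp
  obtain ⟨u, ⟨z, hzW, hz⟩, hu⟩ := exists_limit_seminorm hr hv hW hinv
  let W' : Submodule ℝ (EucSp m) :=
    { carrier := {x | x ∈ W ∧ u x = 0}
      add_mem' := fun {x y} hx hy => ⟨W.add_mem hx.1 hy.1, le_antisymm
        ((map_add_le_add u x y).trans_eq (by rw [hx.2, hy.2, add_zero])) (apply_nonneg _ _)⟩
      zero_mem' := ⟨W.zero_mem, map_zero u⟩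
      smul_mem' := fun c x hx => ⟨W.smul_mem c hx.1, by rw [map_smul_eq_mul, hx.2, mul_zero]⟩ }
  have hW'W : W' < W := by
    refine lt_of_le_of_ne (fun x hx => hx.1) fun h => hz ?_
    have : z ∈ W' := h ▸ hzW
    exact this.2
  have hinv' : ∀ A ∈ msupport μ, ∀ x ∈ W', Matrix.toEuclideanLin A x ∈ W' := fun A hA x hx =>
    ⟨hinv A hA x hx.1, le_antisymm
      ((hu A hA x hx.1).trans_eq (by rw [hx.2, mul_zero])) (apply_nonneg _ _)⟩
  obtain ⟨N', hN'0, hN'⟩ := ih _ (hd ▸ Submodule.finrank_lt_finrank_of_lt hW'W) W' hinv' rfl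
  obtain ⟨P, hPW, hP⟩ := exists_projection W'
  obtain ⟨c, hc, hcY⟩ := exists_norm_le_mul_seminorm u (W ⊓ LinearMap.ker P) (by
    rintro y ⟨hyW, hyP⟩ hy
    have hyP : P y = 0 := hyP
    rw [← hP y ⟨hyW, hy⟩, hyP])
  set D : ℝ := ∑ i, N'.comp P (EuclideanSpace.single i 1) with hD
  have hD0 : 0 ≤ D := Finset.sum_nonneg fun i _ => apply_nonneg _ _
  set C' : ℝ := max C 0
  set κ : ℝ := D * (C' * c) / (r' - r)
  have hrr : 0 < r' - r := sub_pos.2 hrr'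
  have hκ : 0 ≤ κ := div_nonneg (mul_nonneg hD0 (mul_nonneg (le_max_right _ _) hc.le)) hrr.le
  have hκ' : κ * (r' - r) = D * (C' * c) := div_mul_cancel₀ _ hrr.ne'
  let N : Seminorm ℝ (EucSp m) := (κ + 1).toNNReal • u + N'.comp P
  have hN : ∀ x, N x = (κ + 1) * u x + N' (P x) := fun x => by
    rw [add_apply, smul_apply, NNReal.smul_def, smul_eq_mul,
      Real.coe_toNNReal _ (by linarith), Seminorm.comp_apply]
  refine ⟨N, fun x hx hx0 => ?_, fun A hA x hx => ?_⟩
  · rw [hN] at hx0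
    have h1 : 0 ≤ (κ + 1) * u x := mul_nonneg (by linarith) (apply_nonneg _ _)
    have h2 : 0 ≤ N' (P x) := apply_nonneg _ _
    have h3 : u x = 0 := (mul_eq_zero.1 (by linarith : (κ + 1) * u x = 0)).resolve_left (by linarith)
    have hxW' : x ∈ W' := ⟨hx, h3⟩
    rw [hP x hxW'] at hx0 h2
    exact hN'0 x hxW' (by linarith)
  · set y := x - P x with hy
    have hyY : y ∈ W ⊓ LinearMap.ker P :=
      ⟨W.sub_mem hx (hPW x).1, by simp [hy, hP _ (hPW x)]⟩
    have huy : u y ≤ u x := (map_sub_le_add u x (P x)).trans_eq (by rw [(hPW x).2, add_zero])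
    have hsplit : P (Matrix.toEuclideanLin A x) =
        Matrix.toEuclideanLin A (P x) + P (Matrix.toEuclideanLin A y) := by
      rw [hy, map_sub, map_sub, hP _ (hinv' A hA _ (hPW x))]
      abel
    have hAy : N' (P (Matrix.toEuclideanLin A y)) ≤ D * (C' * c) * u x :=
      calc _ ≤ D * ‖Matrix.toEuclideanLin A y‖ := seminorm_le_mul_norm (N'.comp P) _
        _ ≤ D * (C' * (c * u x)) := by
          have hyn : ‖y‖ ≤ c * u x := (hcY y hyY).trans (by gcongr)
          gcongr
          refine (norm_toEuclideanLin_le A y).trans ?_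
          gcongr
          exact (hC A hA).trans (le_max_left _ _)
        _ = _ := by ring
    have hsum := map_add_le_add N' (Matrix.toEuclideanLin A (P x)) (P (Matrix.toEuclideanLin A y))
    rw [hN, hN, hsplit]
    have h1 := hN' A hA _ (hPW x)
    have h2 := mul_le_mul_of_nonneg_left (hu A hA x hx) (by linarith : 0 ≤ κ + 1)
    have h3 : 0 ≤ (r' - r) * u x := mul_nonneg hrr.le (apply_nonneg _ _)
    have h4 : κ * (r' - r) * u x = D * (C' * c) * u x := by rw [hκ']
    linarith

lemma jsr_le_of_frequently_isMeanContracted {m : ℕ} {μ : Measure (Mat m)}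
    (hbdd : HasBoundedSupport μ) {r r' : ℝ} (hr : 0 ≤ r) (hrr' : r < r')
    (hv : ∃ᶠ p in atTop, ∃ v, IsMeanContracted μ r p v) : jsr (msupport μ) ≤ r' := by
  obtain ⟨N, hN0, hN⟩ := exists_contracted_seminorm hbdd hr hrr' hv ⊤ fun _ _ _ _ => trivial
  obtain ⟨c, hc, hcN⟩ := exists_norm_le_mul_seminorm N ⊤ hN0
  set D : ℝ := ∑ i, N (EuclideanSpace.single i 1) with hD
  have hD0 : 0 ≤ D := Finset.sum_nonneg fun i _ => apply_nonneg _ _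
  have hr'0 : 0 ≤ r' := hr.trans hrr'.le
  refine jsr_le_of_opNorm_prodRev_le (C := c * (D + 1)) (by positivity) hr'0 fun k f hf => ?_
  refine opNorm_le _ (by positivity) fun x => ?_
  calc _ ≤ c * N (Matrix.toEuclideanLin (prodRev f) x) := hcN _ trivial
    _ ≤ c * (r' ^ k * N x) := by
      gcongr
      exact apply_prodRev_le hr'0 N f (fun i x => hN _ (hf i) x trivial) x
    _ ≤ c * (r' ^ k * ((D + 1) * ‖x‖)) := by
      gcongr
      exact (seminorm_le_mul_norm N x).trans (by gcongr; linarith)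
    _ = _ := by ring

/-! ### Construction of norms contracted in mean -/

lemma lintegral_rpow_inv_add_le {α : Type*} [MeasurableSpace α] (μ : Measure α) {p : ℝ}
    (hp : 1 ≤ p) {h f g : α → ℝ≥0∞} (hf : Measurable f) (hg : Measurable g)
    (hle : ∀ a, h a ^ (1 / p) ≤ f a ^ (1 / p) + g a ^ (1 / p)) :
    (∫⁻ a, h a ∂μ) ^ (1 / p) ≤ (∫⁻ a, f a ∂μ) ^ (1 / p) + (∫⁻ a, g a ∂μ) ^ (1 / p) := by
  have hp0 : 0 < p := by linarith
  have hroot : ∀ c : ℝ≥0∞, (c ^ (1 / p)) ^ p = c := fun c => by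
    rw [← ENNReal.rpow_mul, one_div_mul_cancel hp0.ne', ENNReal.rpow_one]
  have key := ENNReal.lintegral_Lp_add_le (μ := μ) (hf.pow_const (1 / p)).aemeasurable
    (hg.pow_const (1 / p)).aemeasurable hp
  simp only [hroot] at key
  refine le_trans ?_ key
  gcongr with a
  rw [← hroot (h a)]
  gcongr
  exact hle a

/-- The iterated mean `E ‖A_k ⋯ A_1 x‖ ^ p`. -/
def iterMean {m : ℕ} (μ : Measure (Mat m)) (p : ℕ) : ℕ → EucSp m → ℝ≥0∞
  | 0 => fun x => ‖x‖ₑ ^ p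
  | k + 1 => fun x => ∫⁻ A, iterMean μ p k (Matrix.toEuclideanLin A x) ∂μ

lemma measurable_iterMean {m : ℕ} (μ : Measure (Mat m)) [SFinite μ] (p k : ℕ) :
    Measurable (iterMean μ p k) := by
  induction k with
  | zero => exact measurable_enorm.pow_const p
  | succ k ih =>
    exact (ih.comp (continuous_toEuclideanLin_uncurry m).measurable).lintegral_prod_right'

lemma iterMean_smul {m : ℕ} (μ : Measure (Mat m)) (p k : ℕ) (c : ℝ) (x : EucSp m) :
    iterMean μ p k (c • x) = ‖c‖ₑ ^ p * iterMean μ p k x := by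
  induction k generalizing x with
  | zero => simp [iterMean, enorm_smul, mul_pow]
  | succ k ih =>
    simp only [iterMean, map_smul, ih]
    exact lintegral_const_mul' _ _ (ENNReal.pow_ne_top enorm_ne_top)

lemma iterMean_add_le {m : ℕ} (μ : Measure (Mat m)) [SFinite μ] {p : ℕ} (hp : 1 ≤ p) (k : ℕ)
    (x y : EucSp m) :
    iterMean μ p k (x + y) ^ (1 / (p : ℝ)) ≤
      iterMean μ p k x ^ (1 / (p : ℝ)) + iterMean μ p k y ^ (1 / (p : ℝ)) := by
  induction k generalizing x y with
  | zero =>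
    have hroot : ∀ c : ℝ≥0∞, (c ^ p) ^ (1 / (p : ℝ)) = c := fun c => by
      rw [one_div, ENNReal.pow_rpow_inv_natCast (by omega)]
    simp only [iterMean, hroot]
    exact enorm_add_le x y
  | succ k ih =>
    have hmeas : ∀ z : EucSp m,
        Measurable fun A : Mat m => iterMean μ p k (Matrix.toEuclideanLin A z) := fun z =>
      (measurable_iterMean μ p k).comp (continuous_toEuclideanLin_apply z).measurable
    simp only [iterMean, map_add]
    exact lintegral_rpow_inv_add_le μ (by exact_mod_cast hp) (hmeas x) (hmeas y) fun A => ih _ _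

/-- The discounted sum of the iterated means. -/
def discountedMean {m : ℕ} (μ : Measure (Mat m)) (p : ℕ) (c : ℝ≥0∞) (x : EucSp m) : ℝ≥0∞ :=
  ∑' k, c ^ k * iterMean μ p k x

lemma discountedMean_smul {m : ℕ} (μ : Measure (Mat m)) (p : ℕ) (c : ℝ≥0∞) (a : ℝ)
    (x : EucSp m) : discountedMean μ p c (a • x) = ‖a‖ₑ ^ p * discountedMean μ p c x := by
  simp only [discountedMean, iterMean_smul, ← ENNReal.tsum_mul_left]
  exact tsum_congr fun k => mul_left_comm _ _ _

lemma discountedMean_add_le {m : ℕ} (μ : Measure (Mat m)) [SFinite μ] {p : ℕ} (hp : 1 ≤ p)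
    (c : ℝ≥0∞) (x y : EucSp m) :
    discountedMean μ p c (x + y) ^ (1 / (p : ℝ)) ≤
      discountedMean μ p c x ^ (1 / (p : ℝ)) + discountedMean μ p c y ^ (1 / (p : ℝ)) := by
  simp only [discountedMean, ← lintegral_count]
  refine lintegral_rpow_inv_add_le _ (by exact_mod_cast hp) (measurable_of_countable _)
    (measurable_of_countable _) fun k => ?_
  simp only [ENNReal.mul_rpow_of_nonneg _ _ (show (0 : ℝ) ≤ 1 / p by positivity), ← mul_add]
  gcongr
  exact iterMean_add_le μ hp k x y

lemma mul_lintegral_discountedMean_le {m : ℕ} (μ : Measure (Mat m)) [SFinite μ] (p : ℕ)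
    (c : ℝ≥0∞) (x : EucSp m) :
    c * ∫⁻ A, discountedMean μ p c (Matrix.toEuclideanLin A x) ∂μ ≤ discountedMean μ p c x := by
  have hmeas : ∀ k,
      Measurable fun A : Mat m => iterMean μ p k (Matrix.toEuclideanLin A x) := fun k =>
    (measurable_iterMean μ p k).comp (continuous_toEuclideanLin_apply x).measurable
  simp only [discountedMean]
  rw [lintegral_tsum fun k => ((hmeas k).const_mul _).aemeasurable, ← ENNReal.tsum_mul_left]
  calc _ = ∑' k : ℕ, c ^ (k + 1) * iterMean μ p (k + 1) x := by
        refine tsum_congr fun k => ?_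
        rw [lintegral_const_mul _ (hmeas k), pow_succ', mul_assoc]
        rfl
    _ ≤ _ := ENNReal.tsum_comp_le_tsum_of_injective (add_left_injective 1)
        fun k => c ^ k * iterMean μ p k x

lemma exists_isMeanContracted {m : ℕ} (μ : Measure (Mat m)) [SFinite μ] {p : ℕ} (hp : 1 ≤ p)
    {r : ℝ} (hr : 0 < r)
    (hfin : ∀ x, discountedMean μ p (ENNReal.ofReal (r ^ p)⁻¹) x ≠ ∞) :
    ∃ v, IsMeanContracted μ r p v := by
  set V := discountedMean μ p (ENNReal.ofReal (r ^ p)⁻¹) with hV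
  have hp0 : (0 : ℝ) < 1 / p := by positivity
  have hVfin : ∀ x, V x ^ (1 / (p : ℝ)) ≠ ∞ := fun x => ENNReal.rpow_ne_top_of_nonneg hp0.le (hfin x)
  let v : Seminorm ℝ (EucSp m) := Seminorm.of (fun x => (V x ^ (1 / (p : ℝ))).toReal)
    (fun x y => by
      rw [← ENNReal.toReal_add (hVfin x) (hVfin y)]
      exact ENNReal.toReal_mono (ENNReal.add_ne_top.2 ⟨hVfin x, hVfin y⟩)
        (discountedMean_add_le μ hp _ x y))
    (fun a x => by
      rw [hV, discountedMean_smul, ENNReal.mul_rpow_of_nonneg _ _ hp0.le, one_div,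
        ENNReal.pow_rpow_inv_natCast (by omega), ENNReal.toReal_mul, toReal_enorm])
  have hv : ∀ x, ENNReal.ofReal (v x) ^ p = V x := fun x => by
    change ENNReal.ofReal (V x ^ (1 / (p : ℝ))).toReal ^ p = V x
    rw [ENNReal.ofReal_toReal (hVfin x), one_div, ENNReal.rpow_inv_natCast_pow (by omega)]
  refine ⟨v, fun x hx => ?_, fun x => ?_⟩
  · have h1 : V x = 0 := by rw [← hv, hx]; simp [Nat.one_le_iff_ne_zero.1 hp]
    have h2 := ENNReal.tsum_eq_zero.1 h1 0
    simpa [iterMean, Nat.one_le_iff_ne_zero.1 hp] using h2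
  · simp only [hv]
    rw [ENNReal.ofReal_mul hr.le, mul_pow, hv, ← ENNReal.ofReal_pow hr.le]
    have hrp : 0 < r ^ p := by positivity
    calc _ = ENNReal.ofReal (r ^ p) * (ENNReal.ofReal (r ^ p)⁻¹ *
          ∫⁻ A, V (Matrix.toEuclideanLin A x) ∂μ) := by
          rw [← mul_assoc, ← ENNReal.ofReal_mul hrp.le, mul_inv_cancel₀ hrp.ne',
            ENNReal.ofReal_one, one_mul]
      _ ≤ _ := by
          gcongr
          exact mul_lintegral_discountedMean_le μ p _ x

/-! ### Proper cones -/

lemma IsProperCone.zero_mem {m : ℕ} {K : Set (EucSp m)} (hK : IsProperCone K) : 0 ∈ K := by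
  obtain ⟨x, hx⟩ := hK.solid
  simpa using hK.smul_mem 0 le_rfl x (interior_subset hx)

lemma IsProperCone.exists_inner_pos {m : ℕ} {K : Set (EucSp m)} (hK : IsProperCone K)
    {x : EucSp m} (hx : x ∈ K) (hx0 : x ≠ 0) : ∃ f ∈ dualConeSet K, 0 < ⟪f, x⟫ := by
  obtain ⟨g, u, hgu, hg⟩ := geometric_hahn_banach_point_closed hK.convex hK.isClosed
    (fun h => hx0 (hK.pointed x hx h))
  have hu : u < 0 := by simpa using hg 0 hK.zero_mem
  refine ⟨(InnerProductSpace.toDual ℝ (EucSp m)).symm g, fun y hy => ?_, ?_⟩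
  · rw [InnerProductSpace.toDual_symm_apply]
    by_contra! hneg
    have h1 := hg _ (hK.smul_mem (u / g y) (div_nonneg_of_nonpos hu.le hneg.le) y hy)
    rw [map_smul, smul_eq_mul, div_mul_cancel₀ _ hneg.ne] at h1
    exact lt_irrefl _ h1
  · rw [InnerProductSpace.toDual_symm_apply]
    rw [map_neg] at hgu
    linarith

lemma IsProperCone.exists_norm_le_inner {m : ℕ} {K : Set (EucSp m)} (hK : IsProperCone K) :
    ∃ f : EucSp m, ∀ x ∈ K, ‖x‖ ≤ ⟪f, x⟫ := by
  have hcpt : IsCompact (Metric.sphere (0 : EucSp m) 1 ∩ K) :=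
    (isCompact_sphere _ _).inter_right hK.isClosed
  have hne : ∀ x ∈ Metric.sphere (0 : EucSp m) 1 ∩ K, x ≠ 0 := by
    rintro x ⟨hx, -⟩ rfl
    simp at hx
  have hpos : ∃ f ∈ dualConeSet K, ∀ x ∈ Metric.sphere (0 : EucSp m) 1 ∩ K, 0 < ⟪f, x⟫ := by
    choose! F hF hFpos using fun x (hx : x ∈ Metric.sphere (0 : EucSp m) 1 ∩ K) =>
      hK.exists_inner_pos hx.2 (hne x hx)
    obtain ⟨t, ht, hcover⟩ := hcpt.elim_nhds_subcover (fun x => {y | 0 < ⟪F x, y⟫}) fun x hx =>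
      (isOpen_lt continuous_const (continuous_const.inner continuous_id)).mem_nhds (hFpos x hx)
    refine ⟨∑ x ∈ t, F x, fun y hy => ?_, fun y hy => ?_⟩
    · rw [sum_inner]
      exact Finset.sum_nonneg fun x hx => hF x (ht x hx) y hy
    · obtain ⟨x, hxt, hxy⟩ := Set.mem_iUnion₂.1 (hcover hy)
      rw [sum_inner]
      exact Finset.sum_pos' (fun x hx => hF x (ht x hx) y hy.2) ⟨x, hxt, hxy⟩
  obtain ⟨f, hf, hfpos⟩ := hpos
  have hscale : ∀ x ∈ K, x ≠ 0 → ‖x‖⁻¹ • x ∈ Metric.sphere (0 : EucSp m) 1 ∩ K := fun x hx hx0 =>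
    ⟨by simp [norm_smul, hx0], hK.smul_mem _ (by positivity) x hx⟩
  rcases (Metric.sphere (0 : EucSp m) 1 ∩ K).eq_empty_or_nonempty with he | hne'
  · refine ⟨0, fun x hx => ?_⟩
    by_cases hx0 : x = 0
    · simp [hx0]
    · exact absurd (hscale x hx hx0) (he ▸ Set.notMem_empty _)
  · obtain ⟨z, hz, hmin⟩ := hcpt.exists_isMinOn hne'
      (f := fun y => ⟪f, y⟫) (continuous_const.inner continuous_id).continuousOn
    have hz0 := hfpos z hz
    refine ⟨⟪f, z⟫⁻¹ • f, fun x hx => ?_⟩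
    by_cases hx0 : x = 0
    · simp [hx0]
    have h1 : ⟪f, z⟫ ≤ ⟪f, ‖x‖⁻¹ • x⟫ := hmin (hscale x hx hx0)
    rw [real_inner_smul_right, ← div_eq_inv_mul, le_div_iff₀ (norm_pos_iff.2 hx0)] at h1
    rw [real_inner_smul_left, ← div_eq_inv_mul, le_div_iff₀ hz0, mul_comm]
    exact h1

lemma IsProperCone.exists_sub {m : ℕ} {K : Set (EucSp m)} (hK : IsProperCone K) (x : EucSp m) :
    ∃ a ∈ K, ∃ b ∈ K, x = a - b := by
  obtain ⟨z, hz⟩ := hK.solid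
  have hlim : Tendsto (fun t : ℝ => z + t • x) (𝓝[>] 0) (𝓝 z) := by
    have : Continuous fun t : ℝ => z + t • x := by fun_prop
    simpa using (this.tendsto 0).mono_left nhdsWithin_le_nhds
  obtain ⟨t, htK, ht⟩ := ((hlim.eventually (mem_interior_iff_mem_nhds.1 hz)).and
    self_mem_nhdsWithin).exists
  have ht : 0 < t := ht
  refine ⟨t⁻¹ • (z + t • x), hK.smul_mem _ (by positivity) _ htK, t⁻¹ • z,
    hK.smul_mem _ (by positivity) _ (interior_subset hz), ?_⟩
  rw [smul_add, smul_smul, inv_mul_cancel₀ ht.ne', one_smul]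
  abel

/-! ### The lower bound -/

lemma integrable_dotProduct_elemTensor {m : ℕ} {μ : Measure (Mat m)} [IsProbabilityMeasure μ]
    (hbdd : HasBoundedSupport μ) (p : ℕ) (ψ : Fin (m ^ p) → ℝ) (x : ℕ → EucSp m) :
    Integrable (fun A : Mat m =>
      ψ ⬝ᵥ elemTensor (fun t => Matrix.toEuclideanLin A (x t)) p) μ :=
  integrable_finsetSum _ fun i _ => (integrable_elemTensor hbdd x p i).const_mul (ψ i)

lemma integral_dotProduct_elemTensor {m : ℕ} {μ : Measure (Mat m)} [IsProbabilityMeasure μ]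
    (hbdd : HasBoundedSupport μ) (p : ℕ) (ψ : Fin (m ^ p) → ℝ) (x : ℕ → EucSp m) :
    ∫ A, ψ ⬝ᵥ elemTensor (fun t => Matrix.toEuclideanLin A (x t)) p ∂μ =
      ψ ᵥ* kronExp μ p ⬝ᵥ elemTensor x p := by
  rw [← Matrix.dotProduct_mulVec]
  simp only [dotProduct]
  rw [integral_finsetSum _ fun i _ => (integrable_elemTensor hbdd x p i).const_mul (ψ i)]
  simp only [integral_const_mul, integral_elemTensor hbdd]

lemma iterMean_le_of_mem_cone {m p : ℕ} {μ : Measure (Mat m)} [IsProbabilityMeasure μ]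
    (hbdd : HasBoundedSupport μ) {K : Set (EucSp m)} (hinv : SetLeavesInv (msupport μ) K)
    {f : EucSp m} (hf : ∀ x ∈ K, ‖x‖ ≤ ⟪f, x⟫) (k : ℕ) {x : EucSp m} (hx : x ∈ K) :
    0 ≤ elemTensor (fun _ => f) p ᵥ* kronExp μ p ^ k ⬝ᵥ elemTensor (fun _ => x) p ∧
      iterMean μ p k x ≤ ENNReal.ofReal
        (elemTensor (fun _ => f) p ᵥ* kronExp μ p ^ k ⬝ᵥ elemTensor (fun _ => x) p) := by
  induction k generalizing x with
  | zero =>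
    have h0 : 0 ≤ ⟪f, x⟫ := (norm_nonneg x).trans (hf x hx)
    rw [pow_zero, Matrix.vecMul_one, elemTensor_dotProduct, Finset.prod_const, Finset.card_range]
    refine ⟨by positivity, ?_⟩
    rw [ENNReal.ofReal_pow h0]
    simp only [iterMean, ← ofReal_norm]
    gcongr
    exact hf x hx
  | succ k ih =>
    have hint := integrable_dotProduct_elemTensor hbdd p
      (elemTensor (fun _ => f) p ᵥ* kronExp μ p ^ k) fun _ => x
    have hK : ∀ᵐ A ∂μ, Matrix.toEuclideanLin A x ∈ K := by
      filter_upwards [ae_mem_msupport μ] with A hA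
      exact hinv A hA x hx
    rw [pow_succ, ← Matrix.vecMul_vecMul, ← integral_dotProduct_elemTensor hbdd]
    have hnonneg : 0 ≤ᵐ[μ] fun A : Mat m => elemTensor (fun _ => f) p ᵥ* kronExp μ p ^ k ⬝ᵥ
        elemTensor (fun _ => Matrix.toEuclideanLin A x) p := by
      filter_upwards [hK] with A hA
      exact (ih hA).1
    refine ⟨integral_nonneg_of_ae hnonneg, ?_⟩
    rw [ofReal_integral_eq_lintegral_ofReal hint hnonneg]
    refine lintegral_mono_ae ?_
    filter_upwards [hK] with A hA
    exact (ih hA).2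

lemma discountedMean_ne_top {m p : ℕ} (hm : 1 ≤ m) (hp : 1 ≤ p) {μ : Measure (Mat m)}
    [IsProbabilityMeasure μ] (hbdd : HasBoundedSupport μ) {K : Set (EucSp m)}
    (hK : IsProperCone K) (hinv : SetLeavesInv (msupport μ) K) {r : ℝ} (hr : 0 < r)
    (hspec : specRad (kronExp μ p) < r ^ p) (x : EucSp m) :
    discountedMean μ p (ENNReal.ofReal (r ^ p)⁻¹) x ≠ ∞ := by
  have hp0 : (0 : ℝ) < 1 / p := by positivity
  have hrp : 0 < r ^ p := by positivity
  obtain ⟨f, hf⟩ := hK.exists_norm_le_inner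
  obtain ⟨R, hR1, hR2⟩ := exists_between hspec
  have hR0 : 0 ≤ R := (specRad_nonneg _).trans hR1.le
  have hcone : ∀ y ∈ K, discountedMean μ p (ENNReal.ofReal (r ^ p)⁻¹) y ≠ ∞ := by
    intro y hy
    set F : ℕ → ℝ := fun k =>
      elemTensor (fun _ => f) p ᵥ* kronExp μ p ^ k ⬝ᵥ elemTensor (fun _ => y) p with hF
    set D : ℝ := ∑ j, ∑ i, |elemTensor (fun _ => f) p i| * |elemTensor (fun _ => y) p j| with hD
    have hFle : ∀ᶠ k in atTop, |F k| ≤ D * R ^ k := by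
      filter_upwards [eventually_abs_pow_apply_le (Nat.pow_pos hm) _ hR1] with k hk
      simp only [hF, hD, dotProduct, Matrix.vecMul, Finset.sum_mul]
      refine (Finset.abs_sum_le_sum_abs _ _).trans (Finset.sum_le_sum fun j _ => ?_)
      refine (Finset.abs_sum_le_sum_abs _ _).trans (Finset.sum_le_sum fun i _ => ?_)
      rw [abs_mul, abs_mul, mul_right_comm]
      gcongr
      exact hk i j
    have hsum : Summable fun k => (r ^ p)⁻¹ ^ k * F k := by
      have hgeom : Summable fun k : ℕ => D * (R / r ^ p) ^ k :=
        (summable_geometric_of_lt_one (by positivity) ((div_lt_one hrp).2 hR2)).mul_left D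
      refine hgeom.of_norm_bounded_eventually_nat ?_
      filter_upwards [hFle] with k hk
      rw [norm_mul, Real.norm_of_nonneg (by positivity), Real.norm_eq_abs]
      calc _ ≤ (r ^ p)⁻¹ ^ k * (D * R ^ k) := by gcongr
        _ = _ := by rw [div_eq_inv_mul, mul_pow]; ring
    refine ne_top_of_le_ne_top hsum.tsum_ofReal_ne_top (ENNReal.tsum_le_tsum fun k => ?_)
    rw [ENNReal.ofReal_mul (by positivity), ENNReal.ofReal_pow (by positivity)]
    gcongr
    exact (iterMean_le_of_mem_cone hbdd hinv hf k hy).2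
  obtain ⟨a, ha, b, hb, rfl⟩ := hK.exists_sub x
  have hneg : discountedMean μ p (ENNReal.ofReal (r ^ p)⁻¹) (-b) ≠ ∞ := by
    rw [← neg_one_smul ℝ b, discountedMean_smul]
    exact ENNReal.mul_ne_top (ENNReal.pow_ne_top enorm_ne_top) (hcone b hb)
  intro htop
  have h1 := discountedMean_add_le μ hp (ENNReal.ofReal (r ^ p)⁻¹) a (-b)
  rw [← sub_eq_add_neg, htop, ENNReal.top_rpow_of_pos hp0, top_le_iff, ENNReal.add_eq_top] at h1
  rcases h1 with h1 | h1
  · exact ENNReal.rpow_ne_top_of_nonneg hp0.le (hcone a ha) h1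
  · exact ENNReal.rpow_ne_top_of_nonneg hp0.le hneg h1

/-- Under assumptions (A2) and (A3), the joint spectral radius of the support
of `μ` equals `lim_{p→∞} ρ(E[A^{⊗p}])^{1/p}`. -/
theorem stmt1 (n : ℕ) (hn : 1 ≤ n) (μ : Measure (Mat n)) [IsProbabilityMeasure μ]
    (hbdd : HasBoundedSupport μ)
    (K : Set (EucSp n)) (hK : IsProperCone K) (hinv : SetLeavesInv (msupport μ) K)
    (hsing : IsFiniteDiracComb (μ.singularPart (matLebesgue n))) :
    Tendsto (fun p : ℕ => specRad (kronExp μ p) ^ ((1 : ℝ) / p)) atTop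
      (𝓝 (jsr (msupport μ))) := by
  refine tendsto_order.2 ⟨fun a ha => ?_, fun a ha => ?_⟩
  · by_contra hcon
    obtain ⟨r, har, hr⟩ := exists_between ha
    obtain ⟨r', hrr', hr'⟩ := exists_between hr
    have hfreq : ∃ᶠ p : ℕ in atTop, 1 ≤ p ∧ specRad (kronExp μ p) ^ ((1 : ℝ) / p) ≤ a := by
      refine ((not_eventually.1 hcon).and_eventually (eventually_ge_atTop 1)).mono fun p hp => ?_
      exact ⟨hp.2, not_lt.1 hp.1⟩
    have hr0 : 0 < r := by
      obtain ⟨p, -, hp⟩ := hfreq.exists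
      exact ((Real.rpow_nonneg (specRad_nonneg _) _).trans hp).trans_lt har
    refine absurd (jsr_le_of_frequently_isMeanContracted hbdd hr0.le hrr' ?_) (not_le.2 hr')
    refine hfreq.mono fun p hp => ?_
    refine exists_isMeanContracted μ hp.1 hr0 (discountedMean_ne_top hn hp.1 hbdd hK hinv hr0 ?_)
    have hp0 : p ≠ 0 := Nat.one_le_iff_ne_zero.1 hp.1
    rw [← Real.rpow_inv_natCast_pow (specRad_nonneg (kronExp μ p)) hp0, ← one_div]
    exact pow_lt_pow_left₀ (hp.2.trans_lt har) (Real.rpow_nonneg (specRad_nonneg _) _) hp0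
  · obtain ⟨s, hs, hsa⟩ := exists_between ha
    obtain ⟨C, hC⟩ := hbdd
    have hs0 : 0 < s := (jsr_nonneg hC).trans_lt hs
    filter_upwards [eventually_gt_atTop 0] with p hp
    refine lt_of_le_of_lt ?_ hsa
    calc _ ≤ (s ^ p) ^ ((1 : ℝ) / p) := by
          gcongr
          · exact specRad_nonneg _
          · exact specRad_kronExp_le ⟨C, hC⟩ hs0 (eventually_opNorm_prodRev_le hC hs)
      _ = s := by rw [one_div, Real.pow_rpow_inv_natCast hs0.le hp.ne']

end
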